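/- The range of the splitting map σ on words over {l,r} is exactly the set of nonempty words: a word w' lies in the image of σ if and only if w' ≠ ε. Hence σ is a bijection from the set of all words over {l,r} onto the set of nonempty words over {l,r}. -/

import Mathlib

/-- The two-letter alphabet {l, r}. -/
inductive Letter : Type
  | l : Letter
  | r : Letter
deriving DecidableEq

/-- The splitting map σ on words over {l,r}: `σ(ε) = l`, `σ(l·rⁿ) = l·rⁿ⁺¹`,
and `σ(w) = w` for every other word `w`. -/
def sigma : List Letter → List Letter
  | [] => [Letter.l]
  | Letter.l :: t =>
      if t = List.replicate t.length Letter.r then Letter.l :: (t ++ [Letter.r])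
      else Letter.l :: t
  | w => w

/-!
The words `ε, l, l·r, l·r², …` form a sequence of distinct words along which `σ` moves one step, and
`σ` fixes every other word. As in the Hilbert hotel, such a map is injective and misses exactly the
first term of the sequence, here `ε`.
-/

section ShiftAlongSequence

variable {α : Type*} {f : α → α} {c : ℕ → α}

theorem injective_of_shift_of_fixed (hc : Function.Injective c) (shift : ∀ n, f (c n) = c (n + 1))
    (fixed : ∀ x ∉ Set.range c, f x = x) : Function.Injective f := by
  intro x y hxy
  by_cases hx : x ∈ Set.range c <;> by_cases hy : y ∈ Set.range c
  · obtain ⟨m, rfl⟩ := hx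
    obtain ⟨n, rfl⟩ := hy
    rw [shift, shift] at hxy
    rw [Nat.succ_injective (hc hxy)]
  · obtain ⟨m, rfl⟩ := hx
    rw [shift, fixed y hy] at hxy
    exact absurd ⟨m + 1, hxy⟩ hy
  · obtain ⟨n, rfl⟩ := hy
    rw [shift, fixed x hx] at hxy
    exact absurd ⟨n + 1, hxy.symm⟩ hx
  · rwa [fixed x hx, fixed y hy] at hxy

theorem range_eq_compl_of_shift_of_fixed (hc : Function.Injective c)
    (shift : ∀ n, f (c n) = c (n + 1)) (fixed : ∀ x ∉ Set.range c, f x = x) :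
    Set.range f = {c 0}ᶜ := by
  refine Set.Subset.antisymm ?_ fun y hy => ?_
  · rintro _ ⟨x, rfl⟩ (hx : f x = c 0)
    by_cases hxc : x ∈ Set.range c
    · obtain ⟨n, rfl⟩ := hxc
      exact n.succ_ne_zero (hc ((shift n).symm.trans hx))
    · exact hxc ⟨0, hx.symm.trans (fixed x hxc)⟩
  · by_cases hyc : y ∈ Set.range c
    · obtain ⟨_ | n, rfl⟩ := hyc
      · exact absurd rfl hy
      · exact ⟨c n, shift n⟩
    · exact ⟨y, fixed y hyc⟩

end ShiftAlongSequence

/-- The sequence `ε, l, l·r, l·r², …` of words that `σ` moves. The index is the length of the word,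
so `l·rⁿ` is term `n + 1`. -/
def movedWord : ℕ → List Letter
  | 0 => []
  | n + 1 => Letter.l :: List.replicate n Letter.r

theorem length_movedWord (n : ℕ) : (movedWord n).length = n := by
  cases n <;> simp [movedWord]

theorem movedWord_injective : Function.Injective movedWord :=
  Function.LeftInverse.injective length_movedWord

theorem sigma_movedWord (n : ℕ) : sigma (movedWord n) = movedWord (n + 1) := by
  cases n with
  | zero => rfl
  | succ n => simp [movedWord, sigma, List.replicate_succ']

theorem sigma_eq_self_of_notMem_range_movedWord (w : List Letter)
    (hw : w ∉ Set.range movedWord) : sigma w = w := by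
  match w with
  | [] => exact absurd ⟨0, rfl⟩ hw
  | Letter.r :: _ => rfl
  | Letter.l :: t =>
    have ht : t ≠ List.replicate t.length Letter.r := fun h =>
      hw ⟨t.length + 1, congrArg (Letter.l :: ·) h.symm⟩
    exact if_neg ht

theorem sigma_injective : Function.Injective sigma :=
  injective_of_shift_of_fixed movedWord_injective sigma_movedWord
    sigma_eq_self_of_notMem_range_movedWord

theorem range_sigma : Set.range sigma = {w | w ≠ []} :=
  range_eq_compl_of_shift_of_fixed movedWord_injective sigma_movedWord
    sigma_eq_self_of_notMem_range_movedWord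

/-- The image of σ is exactly the set of nonempty words; hence σ is a bijection
from the set of all words onto the set of nonempty words. -/
theorem sigma_range :
    (∀ w' : List Letter, w' ∈ Set.range sigma ↔ w' ≠ []) ∧
    Set.BijOn sigma Set.univ {w : List Letter | w ≠ []} := by
  refine ⟨fun w' => Set.ext_iff.mp range_sigma w', ?_⟩
  rw [← range_sigma, ← Set.image_univ]
  exact sigma_injective.injOn.bijOn_image
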